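/- Let A be a unital C*-algebra, n,m ≥ 2, Θ = (q_{ij}) with |q_{ij}| = 1, and let s_1,…,s_n, t_1,…,t_m ∈ A satisfy the O_n⊗_Θ O_m relations. Fix k ≥ 1. For μ,ν ∈ {1,…,n}^k define ê_{μν} = s_μ s_ν*, and for i = 1,…,m define t̂_i = Σ_{ρ ∈ {1,…,n}^k} s_ρ t_i s_ρ*. Then: (i) ê_{μν}* = ê_{νμ}, ê_{μν} ê_{ρσ} = δ_{νρ} ê_{μσ}, and Σ_{μ} ê_{μμ} = 1; (ii) t̂_i* t̂_j = δ_{ij}·1 for all i,j and Σ_{i=1}^m t̂_i t̂_i* = 1; (iii) ê_{μν} t̂_i = t̂_i ê_{μν} for all μ,ν and i. -/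

import Mathlib

open scoped BigOperators

/-- Product `s_{μ_1} ⋯ s_{μ_k}` associated to a word `μ ∈ {1,…,n}^k`. -/
noncomputable def wordProd {A : Type*} [Monoid A] {n k : ℕ} (s : Fin n → A)
    (μ : Fin k → Fin n) : A :=
  (List.ofFn fun i => s (μ i)).prod

/-!
The words `s_ρ` of length `k` are again isometries with orthogonal ranges summing to `1`. For any
such finite family `v`, the map `λ a = ∑ i, v i * a * star (v i)` is a unital `*`-endomorphism
satisfying `λ a * v i = v i * a` and `star (v i) * λ a = a * star (v i)`. Hence `λ` carries the
relations of the `t_i` to the `t̂_i`, and its range commutes with every `v i * star (v j)`.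
-/

section CuntzFamilies

variable {A B ι κ : Type*} [Semiring A] [StarRing A] [Semiring B] [StarRing B]

/-- A Toeplitz–Cuntz family: isometries with pairwise orthogonal ranges, in an arbitrary
`*`-semiring. -/
structure IsToeplitzCuntzFamily [DecidableEq ι] (v : ι → A) : Prop where
  star_mul_eq_ite : ∀ i j, star (v i) * v j = if i = j then 1 else 0

/-- A Cuntz family: a finite Toeplitz–Cuntz family whose range projections sum to `1`. For
`n ≥ 2` and `ι = Fin n` these are the defining relations of the Cuntz algebra `O_n`. -/
structure IsCuntzFamily [Fintype ι] [DecidableEq ι] (v : ι → A) : Prop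
    extends IsToeplitzCuntzFamily v where
  sum_mul_star : ∑ i, v i * star (v i) = 1

/-- The matrix units `e_{ij} = v_i v_j*` associated to a family `v`. -/
def matrixUnit (v : ι → A) (i j : ι) : A :=
  v i * star (v j)

theorem star_matrixUnit (v : ι → A) (i j : ι) : star (matrixUnit v i j) = matrixUnit v j i := by
  simp only [matrixUnit, star_mul, star_star]

namespace IsToeplitzCuntzFamily

variable [DecidableEq ι] [DecidableEq κ] {v : ι → A} {w : κ → A}

theorem comp_injective (hv : IsToeplitzCuntzFamily v) {f : κ → ι} (hf : f.Injective) :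
    IsToeplitzCuntzFamily (v ∘ f) where
  star_mul_eq_ite i j := by
    simp only [Function.comp_apply, hv.star_mul_eq_ite, hf.eq_iff]

theorem mul (hv : IsToeplitzCuntzFamily v) (hw : IsToeplitzCuntzFamily w) :
    IsToeplitzCuntzFamily fun p : ι × κ => v p.1 * w p.2 where
  star_mul_eq_ite := by
    rintro ⟨i, k⟩ ⟨j, l⟩
    calc star (v i * w k) * (v j * w l)
        = star (w k) * (star (v i) * v j) * w l := by simp only [star_mul, mul_assoc]
      _ = if (i, k) = (j, l) then 1 else 0 := by
        by_cases hij : i = j <;> simp [hij, hv.star_mul_eq_ite, hw.star_mul_eq_ite]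

theorem map {F : Type*} [FunLike F A B] [RingHomClass F A B] [StarHomClass F A B]
    (hv : IsToeplitzCuntzFamily v) (φ : F) : IsToeplitzCuntzFamily fun i => φ (v i) where
  star_mul_eq_ite i j := by
    rw [← map_star, ← map_mul, hv.star_mul_eq_ite, apply_ite φ, map_one, map_zero]

theorem matrixUnit_mul_matrixUnit (hv : IsToeplitzCuntzFamily v) (i j k l : ι) :
    matrixUnit v i j * matrixUnit v k l = if j = k then matrixUnit v i l else 0 := by
  calc matrixUnit v i j * matrixUnit v k l
      = v i * (star (v j) * v k) * star (v l) := by simp only [matrixUnit, mul_assoc]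
    _ = if j = k then matrixUnit v i l else 0 := by
      simp only [hv.star_mul_eq_ite, matrixUnit, mul_ite, ite_mul, mul_one, mul_zero, zero_mul]

end IsToeplitzCuntzFamily

namespace IsCuntzFamily

variable [Fintype ι] [DecidableEq ι] [Fintype κ] [DecidableEq κ] {v : ι → A} {w : κ → A}

theorem const_one [Unique ι] : IsCuntzFamily fun _ : ι => (1 : A) where
  star_mul_eq_ite i j := by simp [Subsingleton.elim i j]
  sum_mul_star := by simp

theorem comp_equiv (hv : IsCuntzFamily v) (f : κ ≃ ι) : IsCuntzFamily (v ∘ f) where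
  toIsToeplitzCuntzFamily := hv.toIsToeplitzCuntzFamily.comp_injective f.injective
  sum_mul_star := (f.sum_comp fun i => v i * star (v i)).trans hv.sum_mul_star

theorem mul (hv : IsCuntzFamily v) (hw : IsCuntzFamily w) :
    IsCuntzFamily fun p : ι × κ => v p.1 * w p.2 where
  toIsToeplitzCuntzFamily := hv.toIsToeplitzCuntzFamily.mul hw.toIsToeplitzCuntzFamily
  sum_mul_star := by
    calc ∑ p : ι × κ, v p.1 * w p.2 * star (v p.1 * w p.2)
        = ∑ i, v i * (∑ k, w k * star (w k)) * star (v i) := by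
          simp only [Fintype.sum_prod_type, Finset.mul_sum, Finset.sum_mul, star_mul, mul_assoc]
      _ = 1 := by simp only [hw.sum_mul_star, mul_one, hv.sum_mul_star]

theorem map {F : Type*} [FunLike F A B] [RingHomClass F A B] [StarHomClass F A B]
    (hv : IsCuntzFamily v) (φ : F) : IsCuntzFamily fun i => φ (v i) where
  toIsToeplitzCuntzFamily := hv.toIsToeplitzCuntzFamily.map φ
  sum_mul_star := by
    simp only [← map_star, ← map_mul, ← map_sum, hv.sum_mul_star, map_one]

end IsCuntzFamily

theorem wordProd_zero {M : Type*} [Monoid M] {n : ℕ} (s : Fin n → M) (μ : Fin 0 → Fin n) :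
    wordProd s μ = 1 := by
  rw [wordProd, List.ofFn_zero, List.prod_nil]

theorem wordProd_succ {M : Type*} [Monoid M] {n k : ℕ} (s : Fin n → M)
    (μ : Fin (k + 1) → Fin n) : wordProd s μ = s (μ 0) * wordProd s (Fin.tail μ) := by
  rw [wordProd, List.ofFn_succ, List.prod_cons]
  rfl

theorem isCuntzFamily_wordProd {n : ℕ} {s : Fin n → A} (hs : IsCuntzFamily s) (k : ℕ) :
    IsCuntzFamily (wordProd s : (Fin k → Fin n) → A) := by
  induction k with
  | zero => exact (funext (wordProd_zero s)).symm ▸ IsCuntzFamily.const_one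
  | succ k ih =>
    have wordProd_eq_comp : (wordProd s : (Fin (k + 1) → Fin n) → A) =
        (fun p : Fin n × (Fin k → Fin n) => s p.1 * wordProd s p.2) ∘
          (Fin.consEquiv fun _ => Fin n).symm :=
      funext (wordProd_succ s)
    rw [wordProd_eq_comp]
    exact (hs.mul ih).comp_equiv _

section CanonicalEndomorphism

variable [Fintype ι]

/-- The map `λ_v a = ∑ i, v_i a v_i*` of a finite family `v`; for a Cuntz family this is Cuntz's
canonical endomorphism. -/
def conjSum (v : ι → A) (a : A) : A :=
  ∑ i, v i * a * star (v i)

theorem star_conjSum (v : ι → A) (a : A) : star (conjSum v a) = conjSum v (star a) := by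
  simp only [conjSum, star_sum, star_mul, star_star, mul_assoc]

variable [DecidableEq ι] {v : ι → A}

namespace IsToeplitzCuntzFamily

theorem conjSum_mul_apply (hv : IsToeplitzCuntzFamily v) (a : A) (i : ι) :
    conjSum v a * v i = v i * a := by
  simp [conjSum, Finset.sum_mul, mul_assoc, hv.star_mul_eq_ite]

theorem star_apply_mul_conjSum (hv : IsToeplitzCuntzFamily v) (a : A) (i : ι) :
    star (v i) * conjSum v a = a * star (v i) := by
  rw [← star_inj, star_mul, star_mul, star_star, star_conjSum, hv.conjSum_mul_apply]

theorem conjSum_mul (hv : IsToeplitzCuntzFamily v) (a b : A) :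
    conjSum v (a * b) = conjSum v a * conjSum v b := by
  calc conjSum v (a * b)
      = ∑ i, conjSum v a * v i * b * star (v i) := by
        simp only [hv.conjSum_mul_apply]
        simp only [conjSum, mul_assoc]
    _ = conjSum v a * conjSum v b := by
        rw [conjSum.eq_def v b, Finset.mul_sum]
        simp only [mul_assoc]

theorem commute_matrixUnit_conjSum (hv : IsToeplitzCuntzFamily v) (i j : ι) (a : A) :
    Commute (matrixUnit v i j) (conjSum v a) := by
  calc v i * star (v j) * conjSum v a
      = v i * a * star (v j) := by rw [mul_assoc, hv.star_apply_mul_conjSum, mul_assoc]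
    _ = conjSum v a * (v i * star (v j)) := by rw [← hv.conjSum_mul_apply, mul_assoc]

end IsToeplitzCuntzFamily

/-- The canonical endomorphism of a Cuntz family, as a unital `*`-homomorphism; it is linear over
any central scalars `R`. -/
def IsCuntzFamily.canonicalEndomorphism (R : Type*) [CommSemiring R] [Algebra R A]
    (hv : IsCuntzFamily v) : A →⋆ₐ[R] A where
  toFun := conjSum v
  map_one' := by simp only [conjSum, mul_one, hv.sum_mul_star]
  map_mul' := hv.conjSum_mul
  map_zero' := by simp only [conjSum, mul_zero, zero_mul, Finset.sum_const_zero]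
  map_add' a b := by simp only [conjSum, mul_add, add_mul, Finset.sum_add_distrib]
  commutes' r := by
    simp only [conjSum, ← Algebra.commutes r, mul_assoc, ← Finset.mul_sum, hv.sum_mul_star, mul_one]
  map_star' a := (star_conjSum v a).symm

end CanonicalEndomorphism

end CuntzFamilies

theorem stmt_16_general {A κ : Type*} [Semiring A] [StarRing A] [Fintype κ] [DecidableEq κ]
    {n : ℕ} (s : Fin n → A) (t : κ → A)
    (hs : ∀ i j : Fin n, star (s i) * s j = if i = j then 1 else 0)
    (ht : ∀ r l : κ, star (t r) * t l = if r = l then 1 else 0)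
    (hQ : ∑ i : Fin n, s i * star (s i) = 1)
    (hP : ∑ j : κ, t j * star (t j) = 1)
    (k : ℕ)
    (e : (Fin k → Fin n) → (Fin k → Fin n) → A)
    (he : ∀ μ ν, e μ ν = wordProd s μ * star (wordProd s ν))
    (th : κ → A)
    (hth : ∀ i, th i = ∑ ρ : Fin k → Fin n, wordProd s ρ * t i * star (wordProd s ρ)) :
    ((∀ μ ν, star (e μ ν) = e ν μ) ∧
      (∀ μ ν ρ σ, e μ ν * e ρ σ = if ν = ρ then e μ σ else 0) ∧
      (∑ μ : Fin k → Fin n, e μ μ = 1)) ∧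
    ((∀ i j : κ, star (th i) * th j = if i = j then 1 else 0) ∧
      (∑ i : κ, th i * star (th i) = 1)) ∧
    (∀ (μ ν : Fin k → Fin n) (i : κ), e μ ν * th i = th i * e μ ν) := by
  have words : IsCuntzFamily (wordProd s : (Fin k → Fin n) → A) :=
    isCuntzFamily_wordProd ⟨⟨hs⟩, hQ⟩ k
  have image : IsCuntzFamily fun i => words.canonicalEndomorphism ℕ (t i) :=
    IsCuntzFamily.map ⟨⟨ht⟩, hP⟩ (words.canonicalEndomorphism ℕ)
  obtain rfl : e = matrixUnit (wordProd s) := funext₂ he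
  obtain rfl : th = fun i => conjSum (wordProd s) (t i) := funext hth
  exact ⟨⟨star_matrixUnit _, words.matrixUnit_mul_matrixUnit, words.sum_mul_star⟩,
    ⟨image.star_mul_eq_ite, image.sum_mul_star⟩,
    fun μ ν i => words.commute_matrixUnit_conjSum μ ν (t i)⟩

theorem stmt_16 {A : Type*} [NormedRing A] [StarRing A] [CStarRing A]
    [NormedAlgebra ℂ A] [StarModule ℂ A] [CompleteSpace A]
    {n m : ℕ} (hn : 2 ≤ n) (hm : 2 ≤ m)
    (Θ : Fin n → Fin m → ℂ) (hΘ : ∀ i j, ‖Θ i j‖ = 1)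
    (s : Fin n → A) (t : Fin m → A)
    (hs : ∀ i j : Fin n, star (s i) * s j = if i = j then 1 else 0)
    (ht : ∀ r l : Fin m, star (t r) * t l = if r = l then 1 else 0)
    (hQ : ∑ i : Fin n, s i * star (s i) = 1)
    (hP : ∑ j : Fin m, t j * star (t j) = 1)
    (hcomm : ∀ (i : Fin n) (j : Fin m), s i * t j = Θ i j • (t j * s i))
    (k : ℕ) (hk : 1 ≤ k)
    (e : (Fin k → Fin n) → (Fin k → Fin n) → A)
    (he : ∀ μ ν, e μ ν = wordProd s μ * star (wordProd s ν))
    (th : Fin m → A)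
    (hth : ∀ i, th i = ∑ ρ : Fin k → Fin n, wordProd s ρ * t i * star (wordProd s ρ)) :
    ((∀ μ ν, star (e μ ν) = e ν μ) ∧
      (∀ μ ν ρ σ, e μ ν * e ρ σ = if ν = ρ then e μ σ else 0) ∧
      (∑ μ : Fin k → Fin n, e μ μ = 1)) ∧
    ((∀ i j : Fin m, star (th i) * th j = if i = j then 1 else 0) ∧
      (∑ i : Fin m, th i * star (th i) = 1)) ∧
    (∀ (μ ν : Fin k → Fin n) (i : Fin m), e μ ν * th i = th i * e μ ν) :=
  stmt_16_general s t hs ht hQ hP k e he th hth
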